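/- For all integers n ≥ 1 one has ℓ_n > 0 and ℓ̃_n < 0; that is, the linear forms ℓ_n = q_n ζ(5) − p_n and ℓ̃_n = q_n ζ(3) − p̃_n are of constant sign. -/

import Mathlib

noncomputable section

open Filter


/-- `a₀(n)` from recursion (1). -/
def a0 (x : ℚ) : ℚ := 41218*x^3 - 48459*x^2 + 20010*x - 2871

/-- `a₁(n)` from recursion (1). -/
def a1 (x : ℚ) : ℚ := 2*(48802112*x^9 + 89030880*x^8 + 36002654*x^7 - 24317344*x^6
  - 19538418*x^5 + 1311365*x^4 + 3790503*x^3 + 460056*x^2 - 271701*x - 60291)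

/-- `a₂(n)` from recursion (1). -/
def a2 (x : ℚ) : ℚ := 3874492*x^8 - 2617900*x^7 - 3144314*x^6 + 2947148*x^5
  + 647130*x^4 - 1182926*x^3 + 115771*x^2 + 170716*x - 44541

/-- The third-order difference equation (1), imposed for all integers `n ≥ 2`. -/
def Rec1 (y : ℕ → ℚ) : Prop := ∀ n : ℕ, 2 ≤ n →
  ((n : ℚ) + 1)^6 * a0 (n : ℚ) * y (n+1) + a1 (n : ℚ) * y n
    - 4*(2*(n : ℚ) - 1) * a2 (n : ℚ) * y (n-1)
    - 4*((n : ℚ) - 1)^4*(2*(n : ℚ) - 1)*(2*(n : ℚ) - 3) * a0 ((n : ℚ) + 1) * y (n-2) = 0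

/-- The (real) value of the Riemann zeta function at a natural number argument. -/
def zetaRe (s : ℕ) : ℝ := (riemannZeta s).re


/-! ### The linear system satisfied by the three hypergeometric series -/

def s0 (n x y z : ℝ) : ℝ :=
  ((9 + 77*n + 283*n^2 + 575*n^3 + 662*n^4 + 302*n^5) * x
    + (33 + 230*n + 557*n^2 + 262*n^3) * y + (-196*n) * z) / (n+1)^5

def s1 (n x y z : ℝ) : ℝ :=
  ((-2 - 19*n - 77*n^2 - 170*n^3 - 208*n^4 - 98*n^5) * x
    + (-12 - 81*n - 192*n^2 - 90*n^3) * y + (66*n) * z) / (n+1)^3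

def s2 (n x y z : ℝ) : ℝ :=
  ((2*n + 15*n^2 + 45*n^3 + 65*n^4 + 33*n^5) * x
    + (5 + 32*n + 73*n^2 + 34*n^3) * y + (-24*n) * z) / (n+1)

/-- Solutions of the system; index `m` stands for `n = m + 1`. -/
structure Sys (f g h : ℕ → ℝ) : Prop where
  e0 : ∀ m : ℕ, f (m+1) = s0 ((m:ℝ)+1) (f m) (g m) (h m)
  e1 : ∀ m : ℕ, g (m+1) = s1 ((m:ℝ)+1) (f m) (g m) (h m)
  e2 : ∀ m : ℕ, h (m+1) = s2 ((m:ℝ)+1) (f m) (g m) (h m)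

def sysSol (a b c : ℝ) : ℕ → ℝ × ℝ × ℝ
  | 0 => (a, b, c)
  | (m+1) =>
    let v := sysSol a b c m
    (s0 ((m:ℝ)+1) v.1 v.2.1 v.2.2, s1 ((m:ℝ)+1) v.1 v.2.1 v.2.2, s2 ((m:ℝ)+1) v.1 v.2.1 v.2.2)

lemma exists_sys (a b c : ℝ) : ∃ f g h : ℕ → ℝ, Sys f g h ∧ f 0 = a ∧ g 0 = b ∧ h 0 = c :=
  ⟨fun m => (sysSol a b c m).1, fun m => (sysSol a b c m).2.1, fun m => (sysSol a b c m).2.2,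
    ⟨fun _ => rfl, fun _ => rfl, fun _ => rfl⟩, rfl, rfl, rfl⟩

lemma sys_lin {f g h u0 u1 u2 w0 w1 w2 v0 v1 v2 : ℕ → ℝ} (a b : ℝ) (hf : Sys f g h)
    (hu : Sys u0 u1 u2) (hw : Sys w0 w1 w2) (hv : Sys v0 v1 v2)
    (h0 : f 0 = u0 0 * a + w0 0 * b - v0 0) (h1 : g 0 = u1 0 * a + w1 0 * b - v1 0)
    (h2 : h 0 = u2 0 * a + w2 0 * b - v2 0) (m : ℕ) :
    f m = u0 m * a + w0 m * b - v0 m ∧ g m = u1 m * a + w1 m * b - v1 m ∧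
    h m = u2 m * a + w2 m * b - v2 m := by
  induction m with
  | zero => exact ⟨h0, h1, h2⟩
  | succ m ih =>
    obtain ⟨i0, i1, i2⟩ := ih
    rw [hf.e0, hf.e1, hf.e2, hu.e0, hu.e1, hu.e2, hw.e0, hw.e1, hw.e2, hv.e0, hv.e1, hv.e2,
      i0, i1, i2]
    refine ⟨?_, ?_, ?_⟩
    · unfold s0; ring
    · unfold s1; ring
    · unfold s2; ring

/-- The invariant cone. -/
lemma sys_cone {f g h : ℕ → ℝ} (hf : Sys f g h) (a b c : ℝ) (ha : 0 < a) (hb : 0 ≤ b)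
    (hc : 0 < c) (h0 : f 0 = a + b + c) (h1 : g 0 = -(2*a + 3*b + 5*c)/10) (h2 : h 0 = 3*b/10)
    (m : ℕ) :
    ∃ a b c : ℝ, 0 < a ∧ 0 ≤ b ∧ 0 < c ∧ f m = a + b + c ∧
      g m = -((m:ℝ)+1)^2*(2*a + 3*b + 5*c)/10 ∧ h m = ((m:ℝ)+1)^4*(3*b)/10 := by
  induction m with
  | zero => exact ⟨a, b, c, ha, hb, hc, h0, by rw [h1]; norm_num, by rw [h2]; norm_num⟩
  | succ m ih =>
    obtain ⟨a, b, c, ha, hb, hc, i0, i1, i2⟩ := ih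
    rw [hf.e0, hf.e1, hf.e2, i0, i1, i2]
    have hn : 0 < (m:ℝ)+1 := by positivity
    push_cast
    generalize (m:ℝ)+1 = n at hn
    refine ⟨((25/3 + 545/9*n + 1628/9*n^2 + 2549/9*n^3 + 721/3*n^4 + 820/9*n^5)*a
      + (25/3 + 545/9*n + 361/2*n^2 + 279*n^3 + 4099/18*n^4 + 69*n^5)*b
      + (25/3 + 545/9*n + 3235/18*n^2 + 2435/9*n^3 + 405/2*n^4 + 655/9*n^5)*c)/(n+1)^5,
      ((20/3*n + 140/3*n^2 + 386/3*n^3 + 168*n^4 + 262/3*n^5)*a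
      + (20/3*n + 45*n^2 + 118*n^3 + 431/3*n^4 + 52*n^5)*b
      + (20/3*n + 125/3*n^2 + 290/3*n^3 + 95*n^4 + 160/3*n^5)*c)/(n+1)^5,
      ((2/3 + 88/9*n + 2198/45*n^2 + 1054/9*n^3 + 2134/15*n^4 + 3202/45*n^5)*a
      + (2/3 + 88/9*n + 238/5*n^2 + 109*n^3 + 5558/45*n^4 + 218/5*n^5)*b
      + (2/3 + 88/9*n + 406/9*n^2 + 835/9*n^3 + 86*n^4 + 404/9*n^5)*c)/(n+1)^5,
      by positivity, by positivity, by positivity, ?_, ?_, ?_⟩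
    · unfold s0; field_simp; ring
    · unfold s1; field_simp; ring
    · unfold s2; field_simp; ring

lemma sys_sign {f g h : ℕ → ℝ} (hf : Sys f g h) (a b c : ℝ) (ha : 0 < a) (hb : 0 ≤ b)
    (hc : 0 < c) (h0 : f 0 = a + b + c) (h1 : g 0 = -(2*a + 3*b + 5*c)/10) (h2 : h 0 = 3*b/10)
    (m : ℕ) : 0 < f m ∧ g m < 0 := by
  obtain ⟨a, b, c, ha, hb, hc, i0, i1, i2⟩ := sys_cone hf a b c ha hb hc h0 h1 h2 m
  refine ⟨by rw [i0]; positivity, ?_⟩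
  have : 0 < ((m:ℝ)+1)^2*(2*a + 3*b + 5*c)/10 := by positivity
  rw [i1]; linarith

/-! ### Minors of the system satisfy the recursion -/

/-- The recursion over the reals. -/
def RecR (n y3 y2 y1 y0 : ℝ) : Prop :=
  (n + 1)^6 * (41218*n^3 - 48459*n^2 + 20010*n - 2871) * y3
   + 2*(48802112*n^9 + 89030880*n^8 + 36002654*n^7 - 24317344*n^6
  - 19538418*n^5 + 1311365*n^4 + 3790503*n^3 + 460056*n^2 - 271701*n - 60291) * y2
    - 4*(2*n - 1) * (3874492*n^8 - 2617900*n^7 - 3144314*n^6 + 2947148*n^5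
  + 647130*n^4 - 1182926*n^3 + 115771*n^2 + 170716*n - 44541) * y1
    - 4*(n - 1)^4*(2*n - 1)*(2*n - 3) *
      (41218*(n+1)^3 - 48459*(n+1)^2 + 20010*(n+1) - 2871) * y0 = 0

def mA (n A B C : ℝ) : ℝ :=
  ((-42 - 398*n - 1492*n^2 - 2466*n^3 - 1504*n^4)*(n+1)^2*A
    + n*(202 + 752*n + 724*n^2)*(n+1)*B - n*(174 + 348*n)*C)/(n+1)^6

def mB (n A B C : ℝ) : ℝ :=
  ((45 + 427*n + 1603*n^2 + 2655*n^3 + 1622*n^4)*(n+1)^2*A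
    - n*(216 + 808*n + 780*n^2)*(n+1)*B + n*(188 + 376*n)*C)/(n+1)^4

def mC (n A B C : ℝ) : ℝ :=
  ((-10 - 95*n - 357*n^2 - 592*n^3 - 362*n^4)*(n+1)^2*A
    + n*(48 + 180*n + 174*n^2)*(n+1)*B - n*(42 + 84*n)*C)/(n+1)^2

lemma mA_eq (n x y z x' y' z' : ℝ) (hn : 0 < n) :
    s0 n x y z * s1 n x' y' z' - s1 n x y z * s0 n x' y' z'
      = mA n (x*y' - y*x') (x*z' - z*x') (y*z' - z*y') := by
  unfold s0 s1 mA; field_simp; ring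

lemma mB_eq (n x y z x' y' z' : ℝ) (hn : 0 < n) :
    s0 n x y z * s2 n x' y' z' - s2 n x y z * s0 n x' y' z'
      = mB n (x*y' - y*x') (x*z' - z*x') (y*z' - z*y') := by
  unfold s0 s2 mB; field_simp; ring

lemma mC_eq (n x y z x' y' z' : ℝ) (hn : 0 < n) :
    s1 n x y z * s2 n x' y' z' - s2 n x y z * s1 n x' y' z'
      = mC n (x*y' - y*x') (x*z' - z*x') (y*z' - z*y') := by
  unfold s1 s2 mC; field_simp; ring

lemma mrec (n A B C : ℝ) (hn : 0 < n) :
    RecR (n+2) (mA (n+2) (mA (n+1) (mA n A B C) (mB n A B C) (mC n A B C))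
        (mB (n+1) (mA n A B C) (mB n A B C) (mC n A B C))
        (mC (n+1) (mA n A B C) (mB n A B C) (mC n A B C)))
      (mA (n+1) (mA n A B C) (mB n A B C) (mC n A B C)) (mA n A B C) A := by
  unfold RecR mA mB mC
  have e2 : n + 2 + 1 ≠ 0 := by positivity
  have e1 : n + 1 + 1 ≠ 0 := by positivity
  have e0 : n + 1 ≠ 0 := by positivity
  field_simp
  ring

lemma minor_rec {f g h f' g' h' : ℕ → ℝ} (hf : Sys f g h) (hf' : Sys f' g' h') (m : ℕ) :
    RecR ((m:ℝ)+3) (f (m+3) * g' (m+3) - g (m+3) * f' (m+3))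
      (f (m+2) * g' (m+2) - g (m+2) * f' (m+2))
      (f (m+1) * g' (m+1) - g (m+1) * f' (m+1)) (f m * g' m - g m * f' m) := by
  have hA : ∀ m : ℕ, f (m+1) * g' (m+1) - g (m+1) * f' (m+1) = mA ((m:ℝ)+1)
      (f m * g' m - g m * f' m) (f m * h' m - h m * f' m) (g m * h' m - h m * g' m) := by
    intro m
    rw [hf.e0, hf.e1, hf'.e0, hf'.e1]; exact mA_eq _ _ _ _ _ _ _ (by positivity)
  have hB : ∀ m : ℕ, f (m+1) * h' (m+1) - h (m+1) * f' (m+1) = mB ((m:ℝ)+1)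
      (f m * g' m - g m * f' m) (f m * h' m - h m * f' m) (g m * h' m - h m * g' m) := by
    intro m
    rw [hf.e0, hf.e2, hf'.e0, hf'.e2]; exact mB_eq _ _ _ _ _ _ _ (by positivity)
  have hC : ∀ m : ℕ, g (m+1) * h' (m+1) - h (m+1) * g' (m+1) = mC ((m:ℝ)+1)
      (f m * g' m - g m * f' m) (f m * h' m - h m * f' m) (g m * h' m - h m * g' m) := by
    intro m
    rw [hf.e1, hf.e2, hf'.e1, hf'.e2]; exact mC_eq _ _ _ _ _ _ _ (by positivity)
  have key := mrec ((m:ℝ)+1) (f m * g' m - g m * f' m) (f m * h' m - h m * f' m)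
    (g m * h' m - h m * g' m) (by positivity)
  have c2 : ((m+1:ℕ):ℝ)+1 = (m:ℝ)+1+1 := by push_cast; ring
  have c3 : ((m+2:ℕ):ℝ)+1 = (m:ℝ)+1+2 := by push_cast; ring
  have c4 : (m:ℝ)+3 = (m:ℝ)+1+2 := by ring
  rw [hA (m+2), hA (m+1), hB (m+1), hC (m+1), hA m, hB m, hC m, c2, c3, c4]
  exact key

lemma recR_smul {n y3 y2 y1 y0 : ℝ} (c : ℝ) (h : RecR n y3 y2 y1 y0) :
    RecR n (c*y3) (c*y2) (c*y1) (c*y0) := by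
  unfold RecR at *
  linear_combination c * h

lemma recR_unique {n y3 z3 y2 y1 y0 : ℝ} (hn : 2 ≤ n) (h : RecR n y3 y2 y1 y0)
    (h' : RecR n z3 y2 y1 y0) : y3 = z3 := by
  unfold RecR at *
  have hp : 0 < (n + 1)^6 * (41218*n^3 - 48459*n^2 + 20010*n - 2871) := by
    have : 0 < 41218*n^3 - 48459*n^2 + 20010*n - 2871 := by
      obtain ⟨k, rfl⟩ : ∃ k, n = k + 2 := ⟨n - 2, by ring⟩
      have hk : 0 ≤ k := by linarith
      have : 41218*(k+2)^3 - 48459*(k+2)^2 + 20010*(k+2) - 2871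
        = 41218*k^3 + 198849*k^2 + 320790*k + 173057 := by ring
      rw [this]; positivity
    positivity
  apply mul_left_cancel₀ hp.ne'
  linear_combination h - h'

lemma rec_cast {y : ℕ → ℚ} (h : Rec1 y) (m : ℕ) :
    RecR ((m:ℝ)+2) (y (m+3)) (y (m+2)) (y (m+1)) (y m) := by
  have := h (m+2) (by omega)
  have h2 : m + 2 + 1 = m + 3 := rfl
  have h1 : m + 2 - 1 = m + 1 := rfl
  have h0 : m + 2 - 2 = m := rfl
  rw [h2, h1, h0] at this
  unfold a0 a1 a2 at this
  have := congrArg (fun q : ℚ => (q : ℝ)) this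
  push_cast at this
  exact this

lemma eq_minor {f g h f' g' h' : ℕ → ℝ} (hf : Sys f g h) (hf' : Sys f' g' h')
    {y : ℕ → ℚ} (hy : Rec1 y)
    (i1 : (y 1 : ℝ) = -1/4 * (f 0 * g' 0 - g 0 * f' 0))
    (i2 : (y 2 : ℝ) = -1/4 * (f 1 * g' 1 - g 1 * f' 1))
    (i3 : (y 3 : ℝ) = -1/4 * (f 2 * g' 2 - g 2 * f' 2)) (m : ℕ) :
    (y (m+1) : ℝ) = -1/4 * (f m * g' m - g m * f' m) := by
  suffices H : (y (m+1) : ℝ) = -1/4 * (f m * g' m - g m * f' m) ∧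
      (y (m+2) : ℝ) = -1/4 * (f (m+1) * g' (m+1) - g (m+1) * f' (m+1)) ∧
      (y (m+3) : ℝ) = -1/4 * (f (m+2) * g' (m+2) - g (m+2) * f' (m+2)) from H.1
  induction m with
  | zero => exact ⟨i1, i2, i3⟩
  | succ m ih =>
    obtain ⟨j1, j2, j3⟩ := ih
    refine ⟨j2, j3, ?_⟩
    have r1 := rec_cast hy (m+1)
    have r2 := recR_smul (-1/4) (minor_rec hf hf' m)
    have c : ((m+1:ℕ):ℝ)+2 = (m:ℝ)+3 := by push_cast; ring
    rw [c, show m+1+2 = m+3 from rfl, show m+1+1 = m+2 from rfl, j1, j2, j3] at r1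
    have hm : (0:ℝ) ≤ m := by positivity
    exact recR_unique (by linarith) r1 r2

/-! ### The hypergeometric series -/

def bs : ℕ → ℝ → ℝ
  | 0, t => 1 / t^6
  | (n+1), t => bs n t * (((n:ℝ)+1)^4 * (t-n-1) * (t+2*n+1) * (t+2*n+2) / (t+n+1)^7)

lemma bs_succ (n : ℕ) (t : ℝ) : bs (n+1) t =
    bs n t * (((n:ℝ)+1)^4 * (t-n-1) * (t+2*n+1) * (t+2*n+2) / (t+n+1)^7) := rfl

lemma bs_shift (n : ℕ) (t : ℝ) (ht : 0 < t) :
    (t - n) * bs n (t+1) = bs n t * (t^7 * (t+2*n+1) / (t+n+1)^7) := by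
  induction n with
  | zero =>
    simp only [bs, Nat.cast_zero]
    field_simp
    ring
  | succ n ih =>
    have hn : (0:ℝ) ≤ n := by positivity
    have e1 : t + n + 1 ≠ 0 := by positivity
    have e2 : t + 1 + n + 1 ≠ 0 := by positivity
    have e3 : t + (n+1) + 1 ≠ 0 := by positivity
    rw [bs_succ, bs_succ]
    push_cast
    have : (t - (n+1)) * (bs n (t+1) * (((n:ℝ)+1)^4 * (t+1-n-1) * (t+1+2*n+1) * (t+1+2*n+2)
        / (t+1+n+1)^7)) = ((t - n) * bs n (t+1)) * ((t - (n+1)) * (((n:ℝ)+1)^4 * (t+1+2*n+1)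
        * (t+1+2*n+2) / (t+1+n+1)^7)) := by ring
    rw [this, ih, show t + 1 + (n:ℝ) + 1 = t + (n+1) + 1 by ring]
    field_simp
    ring

lemma bs_zero (n k : ℕ) (h : k + 1 ≤ n) : bs n ((k:ℝ)+1) = 0 := by
  induction n with
  | zero => omega
  | succ n ih =>
    rw [bs_succ]
    rcases Nat.lt_or_ge n (k+1) with h1 | h1
    · have : k = n := by omega
      subst this
      simp
    · rw [ih h1]; simp

lemma bs_pos (n k : ℕ) (h : n < k + 1) : 0 < bs n ((k:ℝ)+1) := by
  induction n with
  | zero => simp only [bs]; positivity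
  | succ n ih =>
    rw [bs_succ]
    have h1 := ih (by omega)
    have : (0:ℝ) < (k:ℝ) + 1 - n - 1 := by
      have : (n:ℝ) + 1 ≤ k := by exact_mod_cast (by omega : n + 1 ≤ k)
      linarith
    positivity

lemma bs_nonneg (n k : ℕ) : 0 ≤ bs n ((k:ℝ)+1) := by
  rcases Nat.lt_or_ge n (k+1) with h | h
  · exact (bs_pos n k h).le
  · exact (bs_zero n k h).ge

lemma bs_bound (m : ℕ) : ∃ C : ℝ, 0 ≤ C ∧ ∀ t : ℝ, 1 ≤ t → |bs (m+1) t| ≤ C / t^10 := by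
  induction m with
  | zero =>
    refine ⟨2, by norm_num, fun t ht => ?_⟩
    have ht0 : 0 < t := by linarith
    simp only [bs, Nat.cast_zero]
    have : 1 / t^6 * (((0:ℝ)+1)^4 * (t-0-1) * (t+2*0+1) * (t+2*0+2) / (t+0+1)^7)
      = (t-1)*(t+2)/(t^6*(t+1)^6) := by field_simp; ring
    rw [show (0 + 1 : ℝ) = 1 by norm_num] at *
    rw [show 1 / t^6 * ((1:ℝ)^4 * (t-0-1) * (t+2*0+1) * (t+2*0+2) / (t+0+1)^7)
      = (t-1)*(t+2)/(t^6*(t+1)^6) by field_simp; ring]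
    have h1 : 0 ≤ t - 1 := by linarith
    rw [abs_of_nonneg (by positivity), div_le_div_iff₀ (by positivity) (by positivity)]
    have k1 : (t-1)*(t+2) ≤ 2*(t+1)^2 := by nlinarith
    have k2 : t^4 ≤ (t+1)^4 := by gcongr; linarith
    calc (t-1)*(t+2)*t^10 = ((t-1)*(t+2))*t^4*t^6 := by ring
      _ ≤ (2*(t+1)^2)*(t+1)^4*t^6 := by gcongr
      _ = 2*(t^6*(t+1)^6) := by ring
  | succ m ih =>
    obtain ⟨C, hC, h⟩ := ih
    refine ⟨C * (4*((m:ℝ)+2)^4), by positivity, fun t ht => ?_⟩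
    have ht0 : 0 < t := by linarith
    rw [bs_succ, abs_mul, show C * (4*((m:ℝ)+2)^4) / t^10 = C / t^10 * (4*((m:ℝ)+2)^4) by ring]
    refine mul_le_mul (h t ht) ?_ (abs_nonneg _) (by positivity)
    push_cast
    have hm : (0:ℝ) ≤ m := by positivity
    generalize (m:ℝ) = x at hm
    have hD : 1 ≤ t + (x+1) + 1 := by linarith
    have hD0 : 0 < t + (x+1) + 1 := by linarith
    rw [abs_div, abs_mul, abs_mul, abs_mul, abs_of_pos (by positivity : 0 < t + 2*(x+1) + 1),
      abs_of_pos (by positivity : 0 < t + 2*(x+1) + 2),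
      abs_of_pos (by positivity : 0 < (x+1+1)^4),
      abs_of_pos (by positivity : 0 < (t + (x+1) + 1)^7), div_le_iff₀ (by positivity)]
    have a1 : |t - (x+1) - 1| ≤ t + (x+1) + 1 := by rw [abs_le]; constructor <;> linarith
    have a2 : t + 2*(x+1) + 1 ≤ 2*(t + (x+1) + 1) := by linarith
    have a3 : t + 2*(x+1) + 2 ≤ 2*(t + (x+1) + 1) := by linarith
    have a4 : (t + (x+1) + 1)^3 ≤ (t + (x+1) + 1)^7 := pow_le_pow_right₀ hD (by norm_num)
    calc (x+1+1)^4 * |t - (x+1) - 1| * (t + 2*(x+1) + 1) * (t + 2*(x+1) + 2)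
        ≤ (x+1+1)^4 * (t + (x+1) + 1) * (2*(t + (x+1) + 1)) * (2*(t + (x+1) + 1)) := by gcongr
      _ = 4*(x+2)^4 * (t + (x+1) + 1)^3 := by ring
      _ ≤ 4*(x+2)^4 * (t + (x+1) + 1)^7 := by gcongr

lemma summ_poly (m : ℕ) (c0 c1 c2 c3 c4 c5 c6 : ℝ) (P : ℝ → ℝ)
    (hP : ∀ t, P t = c0 + c1*t + c2*t^2 + c3*t^3 + c4*t^4 + c5*t^5 + c6*t^6) :
    Summable (fun k : ℕ => P ((k:ℝ)+1) * bs (m+1) ((k:ℝ)+1)) := by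
  obtain ⟨C, hC, hb⟩ := bs_bound m
  have hs : Summable (fun k : ℕ => (|c0|+|c1|+|c2|+|c3|+|c4|+|c5|+|c6|) * C * (1 / ((k:ℝ)+1)^2)) := by
    apply Summable.mul_left
    have := (summable_nat_add_iff 1).2 (Real.summable_one_div_nat_pow.2 (by norm_num : 1 < 2))
    simpa using this
  refine Summable.of_norm_bounded hs (fun k => ?_)
  have ht : (1:ℝ) ≤ (k:ℝ)+1 := by have : (0:ℝ) ≤ k := by positivity
                                  linarith
  generalize (k:ℝ)+1 = t at ht
  have ht0 : 0 < t := by linarith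
  rw [Real.norm_eq_abs, abs_mul]
  have hPb : |P t| ≤ (|c0|+|c1|+|c2|+|c3|+|c4|+|c5|+|c6|) * t^6 := by
    have key : ∀ (c : ℝ) (j : ℕ), j ≤ 6 → |c * t^j| ≤ |c| * t^6 := by
      intro c j hj
      rw [abs_mul, abs_of_pos (pow_pos ht0 j)]
      exact mul_le_mul_of_nonneg_left (pow_le_pow_right₀ ht hj) (abs_nonneg _)
    have k0 := key c0 0 (by norm_num)
    have k1 := key c1 1 (by norm_num)
    have k2 := key c2 2 (by norm_num)
    have k3 := key c3 3 (by norm_num)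
    have k4 := key c4 4 (by norm_num)
    have k5 := key c5 5 (by norm_num)
    have k6 := key c6 6 (by norm_num)
    rw [abs_le] at *
    rw [hP]
    simp only [pow_zero, pow_one, mul_one] at *
    constructor <;> linarith [k0.1, k0.2, k1.1, k1.2, k2.1, k2.2, k3.1, k3.2, k4.1, k4.2, k5.1, k5.2, k6.1, k6.2]
  calc |P t| * |bs (m+1) t|
      ≤ ((|c0|+|c1|+|c2|+|c3|+|c4|+|c5|+|c6|) * t^6) * (C / t^10) :=
        mul_le_mul hPb (hb t ht) (abs_nonneg _) (by positivity)
    _ = (|c0|+|c1|+|c2|+|c3|+|c4|+|c5|+|c6|) * C * (1 / t^4) := by field_simp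
    _ ≤ (|c0|+|c1|+|c2|+|c3|+|c4|+|c5|+|c6|) * C * (1 / t^2) := by
        gcongr
        norm_num

def R (i n : ℕ) (t : ℝ) : ℝ := (2*t+n)*(t*(t+n))^i * bs n t

def F (i m : ℕ) : ℝ := ∑' k : ℕ, R i (m+1) ((k:ℝ)+1)

lemma summR0 (m : ℕ) : Summable (fun k : ℕ => R 0 (m+1) ((k:ℝ)+1)) :=
  summ_poly m ((m+1:ℕ):ℝ) 2 0 0 0 0 0 (fun t => (2*t+(m+1:ℕ))*(t*(t+(m+1:ℕ)))^0)
    (fun t => by ring)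

lemma summR1 (m : ℕ) : Summable (fun k : ℕ => R 1 (m+1) ((k:ℝ)+1)) :=
  summ_poly m 0 (((m+1:ℕ):ℝ)^2) (3*((m+1:ℕ):ℝ)) 2 0 0 0
    (fun t => (2*t+(m+1:ℕ))*(t*(t+(m+1:ℕ)))^1) (fun t => by ring)

lemma summR2 (m : ℕ) : Summable (fun k : ℕ => R 2 (m+1) ((k:ℝ)+1)) :=
  summ_poly m 0 0 (((m+1:ℕ):ℝ)^3) (4*((m+1:ℕ):ℝ)^2) (5*((m+1:ℕ):ℝ)) 2 0
    (fun t => (2*t+(m+1:ℕ))*(t*(t+(m+1:ℕ)))^2) (fun t => by ring)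

lemma F0_pos (m : ℕ) : 0 < F 0 m := by
  refine (summR0 m).tsum_pos (fun k => ?_) (m+1) ?_
  · have := bs_nonneg (m+1) k
    unfold R; positivity
  · have := bs_pos (m+1) (m+1) (by omega)
    unfold R; positivity

lemma F1_pos (m : ℕ) : 0 < F 1 m := by
  refine (summR1 m).tsum_pos (fun k => ?_) (m+1) ?_
  · have := bs_nonneg (m+1) k
    unfold R; positivity
  · have := bs_pos (m+1) (m+1) (by omega)
    unfold R; positivity

lemma tele {S h : ℕ → ℝ} (hS : Tendsto S atTop (nhds 0)) (hd : ∀ k, h k = S (k+1) - S k) 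
    (hh : Summable h) : ∑' k, h k = - S 0 := by
  have h1 := hh.hasSum.tendsto_sum_nat
  have h2 : (fun n => ∑ k ∈ Finset.range n, h k) = fun n => S n - S 0 := by
    funext n
    rw [Finset.sum_congr rfl (fun k _ => hd k), Finset.sum_range_sub]
  rw [h2] at h1
  have h3 := hS.sub_const (S 0)
  rw [zero_sub] at h3
  exact tendsto_nhds_unique h1 h3

lemma F_rec (i m : ℕ) (d c0 c1 c2 r0 r1 r2 r3 r4 r5 : ℝ)
    (hs : ∀ m, Summable (fun k : ℕ => R i (m+1) ((k:ℝ)+1)))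
    (S : ℝ → ℝ) (hS : ∀ t, S t = (t-(m+1:ℕ)-1)*(r0+r1*t+r2*t^2+r3*t^3+r4*t^4+r5*t^5) * bs (m+1) t)
    (key : ∀ t : ℝ, 0 < t → d * R i (m+2) t = c0 * R 0 (m+1) t + c1 * R 1 (m+1) t
      + c2 * R 2 (m+1) t + (S (t+1) - S t)) :
    d * F i (m+1) = c0 * F 0 m + c1 * F 1 m + c2 * F 2 m := by
  have hlim : Tendsto (fun k : ℕ => S ((k:ℝ)+1)) atTop (nhds 0) := by
    have := (summ_poly m (-((m+1:ℕ)+1)*r0) (r0-((m+1:ℕ)+1)*r1) (r1-((m+1:ℕ)+1)*r2)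
      (r2-((m+1:ℕ)+1)*r3) (r3-((m+1:ℕ)+1)*r4) (r4-((m+1:ℕ)+1)*r5) r5
      (fun t => (t-(m+1:ℕ)-1)*(r0+r1*t+r2*t^2+r3*t^3+r4*t^4+r5*t^5)) 
      (fun t => by ring)).tendsto_atTop_zero
    refine this.congr (fun k => ?_)
    rw [hS]
  have s0 := (summR0 m).mul_left c0
  have s1 := (summR1 m).mul_left c1
  have s2 := (summR2 m).mul_left c2
  have s3 := (hs (m+1)).mul_left d
  have hd : ∀ k : ℕ, d * R i (m+2) ((k:ℝ)+1) - (c0 * R 0 (m+1) ((k:ℝ)+1)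
      + c1 * R 1 (m+1) ((k:ℝ)+1) + c2 * R 2 (m+1) ((k:ℝ)+1))
      = S (((k+1:ℕ):ℝ)+1) - S ((k:ℝ)+1) := by
    intro k
    rw [key _ (by positivity)]
    push_cast; ring
  have ht := tele hlim hd (s3.sub ((s0.add s1).add s2))
  rw [s3.tsum_sub ((s0.add s1).add s2), (s0.add s1).tsum_add s2, s0.tsum_add s1,
    tsum_mul_left, tsum_mul_left, tsum_mul_left, tsum_mul_left, hS,
    bs_zero (m+1) 0 (by omega)] at ht
  unfold F
  linarith

set_option maxRecDepth 20000 in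
set_option maxHeartbeats 2000000 in
lemma F_sys : Sys (F 0) (F 1) (F 2) := by
  have comm : ∀ (m : ℕ) (t : ℝ), 0 < t → ∀ A : ℝ, 
      (t + 1 - (m+1:ℕ) - 1) * A * bs (m+1) (t+1) = A * (bs (m+1) t * (t^7 * (t+2*(m+1:ℕ)+1) / (t+(m+1:ℕ)+1)^7)) := by
    intro m t ht A
    rw [← bs_shift (m+1) t ht]; ring
  refine ⟨fun m => ?_, fun m => ?_, fun m => ?_⟩
  · unfold s0
    rw [eq_div_iff (by positivity), mul_comm]
    refine F_rec 0 m _ _ _ _ (-2 - 21*((m:ℝ)+1) - 96*((m:ℝ)+1)^2 - 247*((m:ℝ)+1)^3 - 378*((m:ℝ)+1)^4 - 306*((m:ℝ)+1)^5)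
      (-11 - 108*((m:ℝ)+1) - 453*((m:ℝ)+1)^2 - 1018*((m:ℝ)+1)^3 - 1152*((m:ℝ)+1)^4)
      (-32 - 291*((m:ℝ)+1) - 1074*((m:ℝ)+1)^2 - 1795*((m:ℝ)+1)^3)
      (-65 - 522*((m:ℝ)+1) - 1437*((m:ℝ)+1)^2) (-98 - 588*((m:ℝ)+1)) (-98) summR0 _ (fun t => rfl) (fun t ht => ?_)
    rw [comm m t ht]
    unfold R
    rw [bs_succ (m+1)]
    have hm : (0:ℝ) ≤ m := by positivity
    push_cast
    generalize bs (m+1) t = b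
    have e : t + ((m:ℝ)+1) + 1 ≠ 0 := by positivity
    have cm : (m:ℝ) + 2 = (m:ℝ) + 1 + 1 := by ring
    try simp only [cm]
    clear cm
    generalize (m:ℝ) + 1 = n at *
    field_simp
    ring
  · unfold s1
    rw [eq_div_iff (by positivity), mul_comm]
    refine F_rec 1 m _ _ _ _ (2*((m:ℝ)+1) + 17*((m:ℝ)+1)^2 + 60*((m:ℝ)+1)^3 + 110*((m:ℝ)+1)^4 + 98*((m:ℝ)+1)^5)
      (2 + 26*((m:ℝ)+1) + 129*((m:ℝ)+1)^2 + 320*((m:ℝ)+1)^3 + 380*((m:ℝ)+1)^4)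
      (9 + 90*((m:ℝ)+1) + 351*((m:ℝ)+1)^2 + 600*((m:ℝ)+1)^3)
      (21 + 174*((m:ℝ)+1) + 483*((m:ℝ)+1)^2) (33 + 198*((m:ℝ)+1)) 33 summR1 _ (fun t => rfl) (fun t ht => ?_)
    rw [comm m t ht]
    unfold R
    rw [bs_succ (m+1)]
    have hm : (0:ℝ) ≤ m := by positivity
    push_cast
    generalize bs (m+1) t = b
    have e : t + ((m:ℝ)+1) + 1 ≠ 0 := by positivity
    have cm : (m:ℝ) + 2 = (m:ℝ) + 1 + 1 := by ring
    try simp only [cm]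
    clear cm
    generalize (m:ℝ) + 1 = n at *
    field_simp
    ring
  · unfold s2
    rw [eq_div_iff (by positivity), mul_comm]
    refine F_rec 2 m _ _ _ _ (-2*((m:ℝ)+1)^2 - 13*((m:ℝ)+1)^3 - 32*((m:ℝ)+1)^4 - 33*((m:ℝ)+1)^5)
      (-4*((m:ℝ)+1) - 33*((m:ℝ)+1)^2 - 102*((m:ℝ)+1)^3 - 133*((m:ℝ)+1)^4)
      (-2 - 27*((m:ℝ)+1) - 120*((m:ℝ)+1)^2 - 215*((m:ℝ)+1)^3)
      (-7 - 62*((m:ℝ)+1) - 175*((m:ℝ)+1)^2) (-12 - 72*((m:ℝ)+1)) (-12) summR2 _ (fun t => rfl) (fun t ht => ?_)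
    rw [comm m t ht]
    unfold R
    rw [bs_succ (m+1)]
    have hm : (0:ℝ) ≤ m := by positivity
    push_cast
    generalize bs (m+1) t = b
    have e : t + ((m:ℝ)+1) + 1 ≠ 0 := by positivity
    have cm : (m:ℝ) + 2 = (m:ℝ) + 1 + 1 := by ring
    try simp only [cm]
    clear cm
    generalize (m:ℝ) + 1 = n at *
    field_simp
    ring

/-! ### Initial values -/

lemma zeta_hasSum (s : ℕ) (hs : 1 < s) :
    HasSum (fun k : ℕ => 1 / ((k:ℝ)+1)^s) (zetaRe s) := by
  have h1 : Summable (fun n : ℕ => 1 / (n:ℝ)^s) := Real.summable_one_div_nat_pow.2 hs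
  have h2 : zetaRe s = ∑' n : ℕ, 1 / (n:ℝ)^s := by
    unfold zetaRe
    rw [zeta_nat_eq_tsum_of_gt_one hs]
    have : (∑' n : ℕ, 1 / (n:ℂ)^s) = ((∑' n : ℕ, 1 / (n:ℝ)^s : ℝ) : ℂ) := by
      push_cast; rfl
    rw [this, Complex.ofReal_re]
  have h3 := (hasSum_nat_add_iff' 1).2 h1.hasSum
  rw [h2]
  simpa [zero_pow (by omega : s ≠ 0)] using h3

lemma F_init (i : ℕ) (u w d2 d3 d4 d5 d6 : ℝ)
    (hs : ∀ m, Summable (fun k : ℕ => R i (m+1) ((k:ℝ)+1)))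
    (key : ∀ t : ℝ, 0 < t → R i 1 t = u * (1 / t^5) + w * (1 / t^3)
      + ((d2 * (1/(t+1))^2 + d3 * (1/(t+1))^3 + d4 * (1/(t+1))^4 + d5 * (1/(t+1))^5 + d6 * (1/(t+1))^6)
      - (d2 * (1/t)^2 + d3 * (1/t)^3 + d4 * (1/t)^4 + d5 * (1/t)^5 + d6 * (1/t)^6))) :
    F i 0 = u * zetaRe 5 + w * zetaRe 3 - (d2 + d3 + d4 + d5 + d6) := by
  have z5 := (zeta_hasSum 5 (by norm_num)).mul_left u
  have z3 := (zeta_hasSum 3 (by norm_num)).mul_left w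
  have h1 : Tendsto (fun k : ℕ => 1 / ((k:ℝ)+1)) atTop (nhds 0) := tendsto_one_div_add_atTop_nhds_zero_nat
  have hlim : Tendsto (fun k : ℕ => d2 * (1/((k:ℝ)+1))^2 + d3 * (1/((k:ℝ)+1))^3
      + d4 * (1/((k:ℝ)+1))^4 + d5 * (1/((k:ℝ)+1))^5 + d6 * (1/((k:ℝ)+1))^6) atTop (nhds 0) := by
    have := (((((h1.pow 2).const_mul d2).add ((h1.pow 3).const_mul d3)).add
      ((h1.pow 4).const_mul d4)).add ((h1.pow 5).const_mul d5)).add ((h1.pow 6).const_mul d6)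
    simpa using this
  have hd : ∀ k : ℕ, R i 1 ((k:ℝ)+1) - (u * (1 / ((k:ℝ)+1)^5) + w * (1 / ((k:ℝ)+1)^3))
      = (d2 * (1/(((k+1:ℕ):ℝ)+1))^2 + d3 * (1/(((k+1:ℕ):ℝ)+1))^3
      + d4 * (1/(((k+1:ℕ):ℝ)+1))^4 + d5 * (1/(((k+1:ℕ):ℝ)+1))^5 + d6 * (1/(((k+1:ℕ):ℝ)+1))^6)
      - (d2 * (1/((k:ℝ)+1))^2 + d3 * (1/((k:ℝ)+1))^3
      + d4 * (1/((k:ℝ)+1))^4 + d5 * (1/((k:ℝ)+1))^5 + d6 * (1/((k:ℝ)+1))^6) := by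
    intro k
    rw [key _ (by positivity)]
    push_cast; ring
  have ht := tele hlim hd ((hs 0).sub (z5.summable.add z3.summable))
  rw [(hs 0).tsum_sub (z5.summable.add z3.summable), z5.summable.tsum_add z3.summable,
    z5.tsum_eq, z3.tsum_eq] at ht
  have hF : F i 0 = ∑' k : ℕ, R i (0+1) ((k:ℝ)+1) := rfl
  rw [hF]
  norm_num at ht ⊢
  linarith

lemma F0_init : F 0 0 = 18 * zetaRe 5 + 66 * zetaRe 3 - 98 := by
  have := F_init 0 18 66 33 33 21 9 2 summR0 (fun t ht => by
    unfold R; rw [bs_succ 0]; simp only [bs, Nat.cast_zero, Nat.cast_one]; field_simp; ring)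
  rw [this]; norm_num

lemma F1_init : F 1 0 = (-4) * zetaRe 5 + (-24) * zetaRe 3 - (-33) := by
  have := F_init 1 (-4) (-24) (-12) (-12) (-7) (-2) 0 summR1 (fun t ht => by
    unfold R; rw [bs_succ 0]; simp only [bs, Nat.cast_zero, Nat.cast_one]; field_simp; ring)
  rw [this]; norm_num

lemma F2_init : F 2 0 = 0 * zetaRe 5 + 10 * zetaRe 3 - 12 := by
  have := F_init 2 0 10 5 5 2 0 0 summR2 (fun t ht => by
    unfold R; rw [bs_succ 0]; simp only [bs, Nat.cast_zero, Nat.cast_one]; field_simp; ring)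
  rw [this]; norm_num

/-- For all integers `n ≥ 1` the linear forms `ℓ_n = q_n ζ(5) − p_n` and
`ℓ̃_n = q_n ζ(3) − p̃_n` satisfy `ℓ_n > 0` and `ℓ̃_n < 0`. -/
theorem stmt0
    (q p pt : ℕ → ℚ)
    (hq : Rec1 q) (hp : Rec1 p) (hpt : Rec1 pt)
    (hq0 : q 0 = -1) (hq1 : q 1 = 42) (hq2 : q 2 = -17934)
    (hp0 : p 0 = 0) (hp1 : p 1 = 87/2) (hp2 : p 2 = -1190161/64)
    (hpt0 : pt 0 = 0) (hpt1 : pt 1 = 101/2) (hpt2 : pt 2 = -344923/16) :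
    ∀ n : ℕ, 1 ≤ n →
      0 < (q n : ℝ) * zetaRe 5 - (p n : ℝ) ∧
      (q n : ℝ) * zetaRe 3 - (pt n : ℝ) < 0 := by
  obtain ⟨u0, u1, u2, hu, hu0, hu1, hu2⟩ := exists_sys 18 (-4) 0
  obtain ⟨w0, w1, w2, hw, hw0, hw1, hw2⟩ := exists_sys 66 (-24) 10
  obtain ⟨v0, v1, v2, hv, hv0, hv1, hv2⟩ := exists_sys 98 (-33) 12
  have lin := sys_lin (zetaRe 5) (zetaRe 3) F_sys hu hw hv
    (by rw [hu0, hw0, hv0]; exact F0_init) (by rw [hu1, hw1, hv1]; exact F1_init)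
    (by rw [hu2, hw2, hv2]; exact F2_init)
  have su := sys_sign hu (50/3) 0 (4/3) (by norm_num) (by norm_num) (by norm_num)
    (by rw [hu0]; norm_num) (by rw [hu1]; norm_num) (by rw [hu2]; norm_num)
  have sw := sys_sign hw (70/9) (100/3) (224/9) (by norm_num) (by norm_num) (by norm_num)
    (by rw [hw0]; norm_num) (by rw [hw1]; norm_num) (by rw [hw2]; norm_num)
  have hq3 := hq 2 (by norm_num)
  have hp3 := hp 2 (by norm_num)
  have hpt3 := hpt 2 (by norm_num)
  norm_num [a0, a1, a2, hq0, hq1, hq2] at hq3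
  norm_num [a0, a1, a2, hp0, hp1, hp2] at hp3
  norm_num [a0, a1, a2, hpt0, hpt1, hpt2] at hpt3
  have hq3' : q 3 = 14290980 := by linarith
  have hp3' : p 3 = 38410106195/2592 := by linarith
  have hpt3' : pt 3 = 3710571371/216 := by linarith
  have ua0 := hu.e0 0
  have ua1 := hu.e1 0
  have ua2 := hu.e2 0
  have wa0 := hw.e0 0
  have wa1 := hw.e1 0
  have wa2 := hw.e2 0
  have va0 := hv.e0 0
  have va1 := hv.e1 0
  have va2 := hv.e2 0
  norm_num [s0, s1, s2, hu0, hu1, hu2] at ua0 ua1 ua2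
  norm_num [s0, s1, s2, hw0, hw1, hw2] at wa0 wa1 wa2
  norm_num [s0, s1, s2, hv0, hv1, hv2] at va0 va1 va2
  have ub0 := hu.e0 1
  have ub1 := hu.e1 1
  have wb0 := hw.e0 1
  have wb1 := hw.e1 1
  have vb0 := hv.e0 1
  have vb1 := hv.e1 1
  norm_num [s0, s1, s2, ua0, ua1, ua2] at ub0 ub1
  norm_num [s0, s1, s2, wa0, wa1, wa2] at wb0 wb1
  norm_num [s0, s1, s2, va0, va1, va2] at vb0 vb1
  have Hq := eq_minor hu hw hq (by rw [hq1, hu0, hu1, hw0, hw1]; norm_num)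
    (by rw [hq2, ua0, ua1, wa0, wa1]; norm_num) (by rw [hq3', ub0, ub1, wb0, wb1]; norm_num)
  have Hp := eq_minor hv hw hp (by rw [hp1, hv0, hv1, hw0, hw1]; norm_num)
    (by rw [hp2, va0, va1, wa0, wa1]; norm_num) (by rw [hp3', vb0, vb1, wb0, wb1]; norm_num)
  have Hpt := eq_minor hu hv hpt (by rw [hpt1, hu0, hu1, hv0, hv1]; norm_num)
    (by rw [hpt2, ua0, ua1, va0, va1]; norm_num) (by rw [hpt3', ub0, ub1, vb0, vb1]; norm_num)
  intro n hn
  obtain ⟨m, rfl⟩ : ∃ m, n = m + 1 := ⟨n - 1, by omega⟩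
  obtain ⟨l0, l1, -⟩ := lin m
  obtain ⟨su0, su1⟩ := su m
  obtain ⟨sw0, sw1⟩ := sw m
  have f0 := F0_pos m
  have f1 := F1_pos m
  rw [Hq, Hp, Hpt]
  have E1 : -1/4 * (u0 m * w1 m - u1 m * w0 m) * zetaRe 5 - -1/4 * (v0 m * w1 m - v1 m * w0 m)
      = 1/4 * (F 1 m * w0 m + F 0 m * (- w1 m)) := by rw [l0, l1]; ring
  have E2 : -1/4 * (u0 m * w1 m - u1 m * w0 m) * zetaRe 3 - -1/4 * (u0 m * v1 m - u1 m * v0 m)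
      = -(1/4 * (F 1 m * u0 m + F 0 m * (- u1 m))) := by rw [l0, l1]; ring
  have a : 0 < - w1 m := by linarith
  have b : 0 < - u1 m := by linarith
  refine ⟨?_, ?_⟩
  · rw [E1]; positivity
  · rw [E2]; exact neg_neg_of_pos (by positivity)
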